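/- arXiv:2311.02811 — 2 statements merged into one kernel-verified Lean document; each statement's English description precedes it below -/
import Mathlib

section
/- The component-minimum map is a stationary point of the Contour update: let c : V → V send each vertex v to the minimum vertex of its connected component. Then c ∘ c = c (so the pointer graph of c is a disjoint union of stars), and U(c) = c; in particular, if L_k = c then L_j = c for all j ≥ k. -/
variable {V : Type*} [Fintype V] [LinearOrder V] [Nonempty V]

/-- One-step two-order Contour update `U`: `U(L)(w)` is the minimum of the finite
nonempty set `{L(L(w))} ∪ {L(L(v)) : v adjacent to w} ∪
{L(L(v)) : v adjacent to some u with L(u) = w}`. -/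
def contourStep (G : SimpleGraph V) [DecidableRel G.Adj] (L : V → V) : V → V :=
  fun w =>
    (insert (L (L w))
      ((G.neighborFinset w).image (fun v => L (L v)) ∪
        (Finset.univ.filter (fun v => ∃ u, G.Adj v u ∧ L u = w)).image
          (fun v => L (L v)))).min' (Finset.insert_nonempty _ _)

/-- Synchronous two-order Contour labeling sequence: `L_0 = id`, `L_{k+1} = U(L_k)`. -/
def contourSeq (G : SimpleGraph V) [DecidableRel G.Adj] : ℕ → V → V
  | 0 => id
  | (k + 1) => contourStep G (contourSeq G k)

/-- The minimum vertex of the connected component of `v`. -/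
noncomputable def compMin (G : SimpleGraph V) (v : V) : V :=
  haveI : DecidablePred (G.Reachable v) := Classical.decPred _
  (Finset.univ.filter (G.Reachable v)).min'
    ⟨v, Finset.mem_filter.mpr ⟨Finset.mem_univ v, SimpleGraph.Reachable.refl v⟩⟩

theorem compMin_reachable_aux (G : SimpleGraph V) (v : V) : G.Reachable v (compMin G v) := by
  letI : DecidablePred (G.Reachable v) := Classical.decPred _
  unfold compMin
  exact (Finset.mem_filter.mp (Finset.min'_mem _ _)).2

theorem compMin_le_aux (G : SimpleGraph V) {v w : V} (h : G.Reachable v w) :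
    compMin G v ≤ w := by
  letI : DecidablePred (G.Reachable v) := Classical.decPred _
  unfold compMin
  exact Finset.min'_le _ _ (Finset.mem_filter.mpr ⟨Finset.mem_univ _, h⟩)

theorem compMin_congr_aux (G : SimpleGraph V) {v w : V} (h : G.Reachable v w) :
    compMin G v = compMin G w :=
  le_antisymm (compMin_le_aux G (h.trans (compMin_reachable_aux G w)))
    (compMin_le_aux G (h.symm.trans (compMin_reachable_aux G v)))

theorem compMin_idem_aux (G : SimpleGraph V) (v : V) :
    compMin G (compMin G v) = compMin G v :=
  (compMin_congr_aux G (compMin_reachable_aux G v)).symm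

theorem contourStep_compMin_aux (G : SimpleGraph V) [DecidableRel G.Adj] :
    contourStep G (compMin G) = compMin G := by
  funext w
  unfold contourStep
  apply le_antisymm
  · apply Finset.min'_le
    rw [compMin_idem_aux]
    exact Finset.mem_insert_self _ _
  · apply Finset.le_min'
    intro y hy
    simp only [Finset.mem_insert, Finset.mem_union, Finset.mem_image,
      SimpleGraph.mem_neighborFinset, Finset.mem_filter, Finset.mem_univ, true_and,
      compMin_idem_aux] at hy
    rcases hy with rfl | ⟨v, hv, rfl⟩ | ⟨v, ⟨u, hvu, rfl⟩, rfl⟩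
    · exact le_rfl
    · exact (compMin_congr_aux G hv.reachable).le
    · rw [compMin_idem_aux]
      exact (compMin_congr_aux G hvu.reachable).ge

/-- The component-minimum map `c` is a stationary point of the Contour update:
`c ∘ c = c`, `U(c) = c`, and if `L_k = c` then `L_j = c` for all `j ≥ k`. -/
theorem compMin_stationary (G : SimpleGraph V) [DecidableRel G.Adj] :
    (compMin G ∘ compMin G) = compMin G ∧
    contourStep G (compMin G) = compMin G ∧
    (∀ k : ℕ, contourSeq G k = compMin G →
      ∀ j : ℕ, k ≤ j → contourSeq G j = compMin G) := by
  refine ⟨funext (compMin_idem_aux G), contourStep_compMin_aux G, ?_⟩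
  intro k hk j hj
  induction j, hj using Nat.le_induction with
  | base => exact hk
  | succ n _ ih =>
    change contourStep G (contourSeq G n) = _
    rw [ih, contourStep_compMin_aux]
end

section
/- One-order label propagation converges in diameter-many iterations: suppose G is connected and d is a natural number such that every pair of vertices is joined by a path of length at most d. Then for every k ≥ d and every vertex v, M_k(v) equals the minimum vertex of V. -/
variable {V : Type*} [Fintype V] [LinearOrder V] [Nonempty V]

/-- One-order label-propagation step: `v ↦ min ({M v} ∪ {M u : u adjacent to v})`. -/
def propStep (G : SimpleGraph V) [DecidableRel G.Adj] (M : V → V) : V → V :=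
  fun v => (insert (M v) ((G.neighborFinset v).image M)).min' (Finset.insert_nonempty _ _)

/-- One-order label-propagation sequence: `M_0 = id`, `M_{k+1}(v) = min {M_k(u) : u = v or u adjacent to v}`. -/
def propSeq (G : SimpleGraph V) [DecidableRel G.Adj] : ℕ → V → V
  | 0 => id
  | (k + 1) => propStep G (propSeq G k)

theorem propSeq_le_of_walk (G : SimpleGraph V) [DecidableRel G.Adj] {v u : V}
    (p : G.Walk v u) : ∀ k : ℕ, p.length ≤ k → propSeq G k v ≤ u := by
  induction p with
  | nil =>
    intro k _
    induction k with
    | zero => exact le_refl _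
    | succ k ih =>
      exact (Finset.min'_le _ _ (Finset.mem_insert_self _ _)).trans (ih (Nat.zero_le _))
  | cons h p ih =>
    intro k hk
    rw [SimpleGraph.Walk.length_cons] at hk
    cases k with
    | zero => omega
    | succ k =>
      refine (Finset.min'_le _ _ (Finset.mem_insert_of_mem
        (Finset.mem_image_of_mem _ ?_))).trans (ih k (by omega))
      exact (SimpleGraph.mem_neighborFinset _ _ _).2 h

/-- One-order label propagation converges in diameter-many iterations: if `G` is
connected and every pair of vertices is joined by a path of length at most `d`, then
for every `k ≥ d` and every vertex `v`, `M_k(v)` is the minimum vertex of `V`. -/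
theorem prop_converges_in_diameter (G : SimpleGraph V) [DecidableRel G.Adj]
    (hG : G.Connected) (d : ℕ)
    (hdiam : ∀ u v : V, ∃ p : G.Walk u v, p.length ≤ d) :
    ∀ k : ℕ, d ≤ k →
      ∀ v : V, propSeq G k v = (Finset.univ : Finset V).min' Finset.univ_nonempty := by
  intro k hk v
  obtain ⟨p, hp⟩ := hdiam v ((Finset.univ : Finset V).min' Finset.univ_nonempty)
  exact le_antisymm (propSeq_le_of_walk G p k (hp.trans hk))
    (Finset.min'_le _ _ (Finset.mem_univ _))
end
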